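/- Let W be a Morse sequence on K. (1) If z is a p-cycle of K, then ∧̃_p(∧_p(z)) is homologous to z. (2) If z is a p-cocycle of K, then ∨̃_p(∨_p(z)) is cohomologous to z. -/

import Mathlib

/-! ## Basic notions: simplicial complexes, collapses, expansions, fillings -/

variable {V : Type*} [DecidableEq V]

/-- A (finite) simplicial complex: a finite collection of nonempty finite sets that is
closed under taking nonempty subsets. -/
def IsComplex (K : Finset (Finset V)) : Prop :=
  ∀ τ ∈ K, τ.Nonempty ∧ ∀ σ, σ ⊆ τ → σ.Nonempty → σ ∈ K

/-- `ν` is a facet (inclusion-maximal face) of `K`. -/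
def IsFacet (K : Finset (Finset V)) (ν : Finset V) : Prop :=
  ν ∈ K ∧ ∀ ρ ∈ K, ν ⊆ ρ → ρ = ν

/-- `(σ, τ)` is a free pair for `K`: `σ ⊊ τ` and `τ` is the only face of `K`
strictly containing `σ`. -/
def IsFreePair (K : Finset (Finset V)) (σ τ : Finset V) : Prop :=
  σ ∈ K ∧ τ ∈ K ∧ σ ⊂ τ ∧ ∀ ρ ∈ K, σ ⊂ ρ → ρ = τ

/-- `K` is an elementary expansion of `L` (equivalently, `L` is an elementary collapse
of `K`): `L = K \ {σ, τ}` for some free pair `(σ, τ)` of `K`. -/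
def ElemExpansion (L K : Finset (Finset V)) : Prop :=
  ∃ σ τ, IsFreePair K σ τ ∧ L = K \ {σ, τ}

/-- `K` is an elementary filling of `L` (equivalently, `L` is an elementary perforation
of `K`): `L = K \ {ν}` for some facet `ν` of `K`. -/
def ElemFilling (L K : Finset (Finset V)) : Prop :=
  ∃ ν, IsFacet K ν ∧ L = K \ {ν}

/-- `L` is an elementary collapse of `K`. -/
def ElemCollapse (K L : Finset (Finset V)) : Prop :=
  ∃ σ τ, IsFreePair K σ τ ∧ L = K \ {σ, τ}

/-- `K` collapses onto `L`: there is a sequence of elementary collapses from `K` to `L`. -/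
def CollapsesOnto (K L : Finset (Finset V)) : Prop :=
  Relation.ReflTransGen ElemCollapse K L

/-! ## Morse sequences -/

/-- A Morse sequence `⟨∅ = K₀, …, K_k = K⟩`: each `K_i` is a simplicial complex that is
an elementary expansion or an elementary filling of `K_{i-1}`. -/
structure MorseSeq (V : Type*) [DecidableEq V] where
  k : ℕ
  seq : ℕ → Finset (Finset V)
  cpx : ∀ i ≤ k, IsComplex (seq i)
  init : seq 0 = ∅
  step : ∀ i, 1 ≤ i → i ≤ k → ElemExpansion (seq (i - 1)) (seq i) ∨ ElemFilling (seq (i - 1)) (seq i)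

/-- The simplicial complex `K = K_k` on which the Morse sequence lives. -/
def MorseSeq.cplx (W : MorseSeq V) : Finset (Finset V) := W.seq W.k

/-- A face added by a filling step: a critical face of `W`. -/
def MorseSeq.Critical (W : MorseSeq V) (ν : Finset V) : Prop :=
  ∃ i, 1 ≤ i ∧ i ≤ W.k ∧ W.seq i \ W.seq (i - 1) = {ν}

/-- `(σ, τ)` is a regular pair for `W`: the two faces are added together by an
elementary expansion step. -/
def MorseSeq.Regular (W : MorseSeq V) (σ τ : Finset V) : Prop :=
  ∃ i, 1 ≤ i ∧ i ≤ W.k ∧ σ ⊂ τ ∧ W.seq i \ W.seq (i - 1) = {σ, τ}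

/-- `σ` is lower regular for `W`. -/
def MorseSeq.LowerRegular (W : MorseSeq V) (σ : Finset V) : Prop := ∃ τ, W.Regular σ τ

/-- `τ` is upper regular for `W`. -/
def MorseSeq.UpperRegular (W : MorseSeq V) (τ : Finset V) : Prop := ∃ σ, W.Regular σ τ

/-! ## Chains modulo 2 -/

/-- The boundary `∂(σ)` of a simplex: the chain of its (nonempty) codimension-one faces. -/
def bd (σ : Finset V) : Finset (Finset V) :=
  σ.powerset.filter fun ρ => ρ.Nonempty ∧ ρ.card + 1 = σ.card

/-- The coboundary `δ(σ)` of a simplex in `K`: the chain of faces of `K` of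
codimension one over `σ` containing `σ`. -/
def cobd (K : Finset (Finset V)) (σ : Finset V) : Finset (Finset V) :=
  K.filter fun τ => σ ⊆ τ ∧ σ.card + 1 = τ.card

/-- Mod-2 linear extension: `chainSum c f` is the sum (symmetric difference) of
the chains `f σ` over `σ ∈ c`; an element belongs to it iff it belongs to an odd
number of the `f σ`. -/
def chainSum (c : Finset (Finset V)) (f : Finset V → Finset (Finset V)) : Finset (Finset V) :=
  (c.biUnion f).filter fun ν => (c.filter fun σ => ν ∈ f σ).card % 2 = 1

/-- `c` is a `p`-chain of `K`: a set of `p`-simplices of `K`. -/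
def IsChainOf (K : Finset (Finset V)) (p : ℕ) (c : Finset (Finset V)) : Prop :=
  ∀ ν ∈ c, ν ∈ K ∧ ν.card = p + 1

/-- `c` is a chain of critical `p`-simplices of `W` (an element of `Ŵ[p]`). -/
def IsCritChain (W : MorseSeq V) (p : ℕ) (c : Finset (Finset V)) : Prop :=
  ∀ ν ∈ c, W.Critical ν ∧ ν.card = p + 1

/-! ## Frames, reference and coreference maps -/

/-- A frame on `W`: it assigns to each `p`-simplex of `K` a chain of critical
`p`-simplices of `W`. -/
def IsFrame (W : MorseSeq V) (Υ : Finset V → Finset (Finset V)) : Prop :=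
  ∀ ν ∈ W.cplx, ∀ μ ∈ Υ ν, W.Critical μ ∧ μ.card = ν.card

/-- `Λ` is the reference map of `W`: a frame with `Λ(ν) = ν` for critical `ν`, and
`Λ(τ) = 0`, `Λ(∂τ) = 0` for upper regular `τ`. -/
def IsRefMap (W : MorseSeq V) (Λ : Finset V → Finset (Finset V)) : Prop :=
  IsFrame W Λ ∧ (∀ ν, W.Critical ν → Λ ν = {ν}) ∧
    ∀ τ, W.UpperRegular τ → Λ τ = ∅ ∧ chainSum (bd τ) Λ = ∅

/-- `Λ` is the coreference map of `W`: a frame with `Λ(ν) = ν` for critical `ν`, and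
`Λ(σ) = 0`, `Λ(δσ) = 0` for lower regular `σ`. -/
def IsCorefMap (W : MorseSeq V) (Λ : Finset V → Finset (Finset V)) : Prop :=
  IsFrame W Λ ∧ (∀ ν, W.Critical ν → Λ ν = {ν}) ∧
    ∀ σ, W.LowerRegular σ → Λ σ = ∅ ∧ chainSum (cobd W.cplx σ) Λ = ∅

/-- The extension map `∧̃` of `W` (defined from the coreference map `Vee`):
`∧̃(κ) = {ν ∈ K | κ ∈ ∨(ν)}`. -/
def extMap (W : MorseSeq V) (Vee : Finset V → Finset (Finset V)) (κ : Finset V) :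
    Finset (Finset V) :=
  W.cplx.filter fun ν => κ ∈ Vee ν

/-- The coextension map `∨̃` of `W` (defined from the reference map `Λ`):
`∨̃(κ) = {ν ∈ K | κ ∈ ∧(ν)}`. -/
def coextMap (W : MorseSeq V) (Λ : Finset V → Finset (Finset V)) (κ : Finset V) :
    Finset (Finset V) :=
  W.cplx.filter fun ν => κ ∈ Λ ν

/-! ## Homologous cycles, cohomologous cocycles (mod 2) -/

/-- Two `p`-chains of `K` are homologous: their sum is the boundary of a `(p+1)`-chain
of `K`. -/
def Homologous (K : Finset (Finset V)) (p : ℕ) (z z' : Finset (Finset V)) : Prop :=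
  ∃ c, IsChainOf K (p + 1) c ∧ chainSum c bd = symmDiff z z'

/-- Two `p`-chains of `K` are cohomologous: their sum is the coboundary of a
`(p-1)`-chain of `K`. -/
def Cohomologous (K : Finset (Finset V)) (p : ℕ) (z z' : Finset (Finset V)) : Prop :=
  ∃ c, IsChainOf K (p - 1) c ∧ chainSum c (cobd K) = symmDiff z z'

/-!
Let `S`, `T` and `C` be the sets of lower regular, upper regular and critical faces. Ordering the
regular pairs by their time of appearance makes the block `T × S` of the boundary matrix
unitriangular, hence invertible. Let `H` be the space of chains `y` such that `y` and `∂y` both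
vanish on `S`. By surjectivity of the block, every cycle `z` can be changed by the boundary of a
chain on `T` into a cycle that vanishes on `S`, which lies in `H`, and this leaves `∧(z)`
unchanged. By injectivity of the block, an element of `H` is determined by its restriction to `C`.
On `H` the map `∧` is the restriction to `C`, and `∧̃` takes values in `H` and is a section of
that restriction, so `∧̃ ∘ ∧` is the identity on `H`. Transposing the boundary matrix and
exchanging `S` with `T` gives the statement on cocycles.
-/

section Matching

open scoped Matrix

/-- A matching on the basis `α` of a based complex with differential `y ↦ y ᵥ* B`, in algebraic
form: the pairs `(s i, t i)` and the critical cells `C` exhaust the basis, and the block of `B` from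
the upper cells `t i` to the lower cells `s i` is invertible, which is all that is retained of
acyclicity. -/
structure IsMorseMatching {R α ι : Type*} [CommRing R] [Fintype ι] [DecidableEq ι]
    (B : Matrix α α R) (s t : ι → α) (C : Set α) : Prop where
  injective_lower : Function.Injective s
  injective_upper : Function.Injective t
  cover : ∀ a, a ∈ C ∨ a ∈ Set.range s ∨ a ∈ Set.range t
  isUnit_submatrix : IsUnit (B.submatrix t s)

/-- The defining equations of a reference map, whose value at `a` is the row `L a`. Taking
`Bᵀ` for `B` and the lower cells for `t` gives the equations of a coreference map. -/
structure IsReferenceMatrix {R α ι : Type*} [CommRing R] [Fintype α] [DecidableEq α]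
    (B : Matrix α α R) (t : ι → α) (C : Set α) (L : Matrix α α R) : Prop where
  row_critical : ∀ a ∈ C, L a = Pi.single a 1
  row_matched : ∀ i, L (t i) = 0
  mul_row_matched : ∀ i, (B * L) (t i) = 0

variable {R α ι : Type*} [CommRing R] [Fintype ι] [DecidableEq ι]

theorem isUnit_of_blockTriangular_of_injective {β : Type*} [LinearOrder β] {A : Matrix ι ι R}
    {b : ι → β} (hb : Function.Injective b) (hA : A.BlockTriangular b)
    (hdiag : ∀ i, IsUnit (A i i)) : IsUnit A := by
  let _ : LinearOrder ι := LinearOrder.lift' b hb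
  have hdet : A.det = ∏ i, A i i := Matrix.det_of_isUpperTriangular fun _ _ hij => hA hij
  rw [Matrix.isUnit_iff_isUnit_det, hdet]
  exact IsUnit.prod_univ_iff.2 hdiag

variable {B L M : Matrix α α R} {s t : ι → α} {C : Set α}

theorem IsMorseMatching.transpose (h : IsMorseMatching B s t C) : IsMorseMatching Bᵀ t s C where
  injective_lower := h.injective_upper
  injective_upper := h.injective_lower
  cover a := (h.cover a).imp_right Or.symm
  isUnit_submatrix := by
    rw [← Matrix.transpose_submatrix, Matrix.isUnit_transpose]
    exact h.isUnit_submatrix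

variable [Fintype α]

theorem IsMorseMatching.eq_zero (h : IsMorseMatching B s t C) {y : α → R}
    (hC : ∀ a ∈ C, y a = 0) (hs : ∀ i, y (s i) = 0) (hB : ∀ i, (y ᵥ* B) (s i) = 0) : y = 0 := by
  have hsupp : ∀ a ∉ Set.range t, y a = 0 := by
    intro a ha
    rcases h.cover a with haC | ⟨i, rfl⟩ | hat
    exacts [hC a haC, hs i, absurd hat ha]
  have hblock : (y ∘ t) ᵥ* B.submatrix t s = 0 := by
    funext j
    rw [Pi.zero_apply, ← hB j]
    exact Fintype.sum_of_injective t h.injective_upper _ _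
      (fun a ha => by rw [hsupp a ha, zero_mul]) fun _ => rfl
  have hyt : y ∘ t = 0 :=
    Matrix.vecMul_injective_of_isUnit h.isUnit_submatrix (hblock.trans (Matrix.zero_vecMul _).symm)
  funext a
  by_cases ha : a ∈ Set.range t
  · obtain ⟨i, rfl⟩ := ha
    exact congrFun hyt i
  · exact hsupp a ha

variable [DecidableEq α]

theorem IsMorseMatching.vecMul_apply_critical (h : IsMorseMatching B s t C)
    (hL : IsReferenceMatrix B t C L) {y : α → R} (hs : ∀ i, y (s i) = 0) {k : α} (hk : k ∈ C) :
    (y ᵥ* L) k = y k := by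
  have hother : ∀ a ≠ k, y a * L a k = 0 := by
    intro a hak
    rcases h.cover a with ha | ⟨i, rfl⟩ | ⟨i, rfl⟩
    · rw [hL.row_critical a ha, Pi.single_eq_of_ne' hak, mul_zero]
    · rw [hs i, zero_mul]
    · rw [hL.row_matched i, Pi.zero_apply, mul_zero]
  calc (y ᵥ* L) k = y k * L k k := Fintype.sum_eq_single k hother
    _ = y k := by rw [hL.row_critical k hk, Pi.single_eq_same, mul_one]

theorem IsMorseMatching.vecMul_reference_vecMul_coreference (h : IsMorseMatching B s t C)
    (hL : IsReferenceMatrix B t C L) (hM : IsReferenceMatrix Bᵀ s C M) {y : α → R}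
    (hs : ∀ i, y (s i) = 0) (hB : ∀ i, (y ᵥ* B) (s i) = 0) : y ᵥ* L ᵥ* Mᵀ = y := by
  have hcoord : ∀ a, (y ᵥ* L ᵥ* Mᵀ) a = M a ⬝ᵥ (y ᵥ* L) := fun a => by
    rw [Matrix.vecMul_transpose]; rfl
  rw [← sub_eq_zero]
  refine h.eq_zero (fun a ha => ?_) (fun i => ?_) (fun i => ?_)
  · rw [Pi.sub_apply, hcoord, hM.row_critical a ha, single_one_dotProduct,
      h.vecMul_apply_critical hL hs ha, sub_self]
  · rw [Pi.sub_apply, hcoord, hM.row_matched, zero_dotProduct, hs, sub_zero]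
  · have hcol : (y ᵥ* L ᵥ* Mᵀ ᵥ* B) (s i) = (Bᵀ * M) (s i) ⬝ᵥ (y ᵥ* L) := by
      rw [Matrix.vecMul_vecMul, ← Matrix.transpose_transpose B, ← Matrix.transpose_mul,
        Matrix.vecMul_transpose, Matrix.transpose_transpose]
      rfl
    rw [Matrix.sub_vecMul, Pi.sub_apply, hcol, hM.mul_row_matched, zero_dotProduct, hB, sub_zero]

theorem IsMorseMatching.exists_vecMul_eq_sub (h : IsMorseMatching B s t C) (hBB : B * B = 0)
    (hL : IsReferenceMatrix B t C L) (hM : IsReferenceMatrix Bᵀ s C M) {z : α → R}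
    (hz : z ᵥ* B = 0) : ∃ c, c ᵥ* B = z ᵥ* L ᵥ* Mᵀ - z := by
  obtain ⟨x, hx⟩ := Matrix.vecMul_surjective_iff_isUnit.2 h.isUnit_submatrix (-(z ∘ s))
  have hextend (N : Matrix α α R) :
      x ᵥ* (1 : Matrix α α R).submatrix t id ᵥ* N = x ᵥ* N.submatrix t id := by
    rw [Matrix.vecMul_vecMul, ← Equiv.coe_refl, Matrix.one_submatrix_mul]; rfl
  let c := x ᵥ* (1 : Matrix α α R).submatrix t id
  have hcL : c ᵥ* B ᵥ* L = 0 := by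
    have hzero : (B * L).submatrix t id = 0 := Matrix.ext fun i => congrFun (hL.mul_row_matched i)
    rw [Matrix.vecMul_vecMul, hextend, hzero, Matrix.vecMul_zero]
  have hlower : ∀ i, (z + c ᵥ* B) (s i) = 0 := fun i => by
    have hxi : (x ᵥ* B.submatrix t id) (s i) = -z (s i) := congrFun hx i
    rw [Pi.add_apply, hextend, hxi, add_neg_cancel]
  have hcycle : (z + c ᵥ* B) ᵥ* B = 0 := by
    rw [Matrix.add_vecMul, hz, Matrix.vecMul_vecMul, hBB, Matrix.vecMul_zero, zero_add]
  refine ⟨c, eq_sub_of_add_eq' ?_⟩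
  calc z + c ᵥ* B = (z + c ᵥ* B) ᵥ* L ᵥ* Mᵀ :=
        (h.vecMul_reference_vecMul_coreference hL hM hlower (congrFun hcycle <| s ·)).symm
    _ = z ᵥ* L ᵥ* Mᵀ := by rw [Matrix.add_vecMul, hcL, add_zero]

end Matching

section Chains

open scoped Matrix

/-- The coordinates of a mod-2 chain of `K` in the basis of the faces of `K`. -/
def chainVec (K c : Finset (Finset V)) : K → ZMod 2 := fun a => if (a : Finset V) ∈ c then 1 else 0

/-- The matrix whose row at `a` is the chain `f a`. It acts on row vectors, so that
`chainSum c f` corresponds to `chainVec K c ᵥ* chainMatrix K f`. -/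
def chainMatrix (K : Finset (Finset V)) (f : Finset V → Finset (Finset V)) :
    Matrix K K (ZMod 2) :=
  Matrix.of fun a => chainVec K (f a)

/-- The transpose on `K` of a map from simplices to chains; the (co)extension map of a Morse
sequence is the transpose of its (co)reference map. -/
def transposeOn (K : Finset (Finset V)) (f : Finset V → Finset (Finset V)) (κ : Finset V) :
    Finset (Finset V) :=
  K.filter fun ν => κ ∈ f ν

variable {K c : Finset (Finset V)} {f g : Finset V → Finset (Finset V)} {p : ℕ}

theorem mem_chainSum {a : Finset V} :
    a ∈ chainSum c f ↔ Odd (c.filter fun x => a ∈ f x).card := by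
  rw [chainSum, Finset.mem_filter, ← Nat.odd_iff, and_iff_right_iff_imp]
  intro hodd
  obtain ⟨x, hx⟩ := Finset.card_pos.1 hodd.pos
  obtain ⟨hxc, hax⟩ := Finset.mem_filter.1 hx
  exact Finset.mem_biUnion.2 ⟨x, hxc, hax⟩

theorem exists_mem_of_mem_chainSum {a : Finset V} (ha : a ∈ chainSum c f) : ∃ x ∈ c, a ∈ f x :=
  Finset.mem_biUnion.1 (Finset.mem_filter.1 ha).1

theorem chainSum_subset (hf : ∀ x ∈ c, f x ⊆ K) : chainSum c f ⊆ K := fun _ ha =>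
  let ⟨x, hx, hax⟩ := exists_mem_of_mem_chainSum ha
  hf x hx hax

theorem isChainOf_chainSum_of_forall (hf : ∀ x ∈ c, IsChainOf K p (f x)) :
    IsChainOf K p (chainSum c f) := fun a ha =>
  let ⟨x, hx, hax⟩ := exists_mem_of_mem_chainSum ha
  hf x hx a hax

theorem IsChainOf.symmDiff {z z' : Finset (Finset V)} (hz : IsChainOf K p z)
    (hz' : IsChainOf K p z') : IsChainOf K p (symmDiff z z') := fun a ha =>
  (Finset.mem_union.1 (symmDiff_le_sup (a := z) (b := z') ha)).elim (hz a) (hz' a)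

theorem chainSum_filter {P Q : Finset V → Prop} [DecidablePred P] [DecidablePred Q]
    (hPQ : ∀ x ∈ c, ∀ a ∈ f x, P x ↔ Q a) :
    chainSum (c.filter P) f = (chainSum c f).filter Q := by
  ext a
  rw [Finset.mem_filter, mem_chainSum, mem_chainSum, Finset.filter_filter]
  by_cases ha : Q a
  · have heq : (c.filter fun x => P x ∧ a ∈ f x) = c.filter fun x => a ∈ f x :=
      Finset.filter_congr fun x hx => and_iff_right_of_imp fun hax => (hPQ x hx a hax).2 ha
    rw [heq, and_iff_left ha]
  · have hempty : (c.filter fun x => P x ∧ a ∈ f x) = ∅ :=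
      Finset.filter_eq_empty_iff.2 fun x hx ⟨hPx, hax⟩ => ha ((hPQ x hx a hax).1 hPx)
    simp [hempty, ha]

theorem chainVec_empty (K : Finset (Finset V)) : chainVec K ∅ = 0 := by
  funext a
  simp [chainVec]

theorem chainVec_singleton (a : K) : chainVec K {(a : Finset V)} = Pi.single a 1 := by
  funext b
  simp [chainVec, Pi.single_apply]

theorem chainVec_symmDiff (c c' : Finset (Finset V)) :
    chainVec K (symmDiff c c') = chainVec K c - chainVec K c' := by
  funext a
  by_cases h : (a : Finset V) ∈ c <;> by_cases h' : (a : Finset V) ∈ c' <;>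
    simp only [chainVec, Finset.mem_symmDiff, Pi.sub_apply, h, h'] <;> decide

theorem eq_of_chainVec_eq {c' : Finset (Finset V)} (hc : c ⊆ K) (hc' : c' ⊆ K)
    (h : chainVec K c = chainVec K c') : c = c' := by
  have hmem : ∀ a ∈ K, (a ∈ c ↔ a ∈ c') := fun a ha => by
    simpa [chainVec, ite_eq_iff, iff_iff_and_or_not_and_not] using congrFun h ⟨a, ha⟩
  ext a
  exact ⟨fun ha => (hmem a (hc ha)).1 ha, fun ha => (hmem a (hc' ha)).2 ha⟩

theorem exists_chainVec_eq (v : K → ZMod 2) : ∃ c ⊆ K, chainVec K c = v := by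
  refine ⟨(Finset.univ.filter fun a => v a = 1).map (Function.Embedding.subtype _), ?_, ?_⟩
  · intro a ha
    obtain ⟨b, -, rfl⟩ := Finset.mem_map.1 ha
    exact b.2
  · funext a
    have hv : ∀ x : ZMod 2, (if x = 1 then 1 else 0) = x := by decide
    simp [chainVec, hv]

theorem chainVec_chainSum (hc : c ⊆ K) :
    chainVec K (chainSum c f) = chainVec K c ᵥ* chainMatrix K f := by
  funext a
  calc chainVec K (chainSum c f) a
      = ((c.filter fun x => (a : Finset V) ∈ f x).card : ZMod 2) := by
        rw [chainVec]
        split_ifs with ha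
        · exact (ZMod.natCast_eq_one_iff_odd.2 (mem_chainSum.1 ha)).symm
        · rw [mem_chainSum, Nat.not_odd_iff_even] at ha
          exact (ZMod.natCast_eq_zero_iff_even.2 ha).symm
    _ = ∑ x ∈ K, if x ∈ c ∧ (a : Finset V) ∈ f x then 1 else 0 := by
        rw [Finset.sum_boole, ← Finset.filter_filter, Finset.filter_mem_eq_inter,
          Finset.inter_eq_right.2 hc]
    _ = ∑ x : K, chainVec K c x * chainMatrix K f x a := by
        rw [← Finset.sum_coe_sort]
        simp only [chainVec, chainMatrix, Matrix.of_apply, ite_zero_mul_ite_zero, mul_one]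

theorem chainMatrix_mul (hf : ∀ a ∈ K, f a ⊆ K) :
    chainMatrix K f * chainMatrix K g = chainMatrix K fun a => chainSum (f a) g := by
  funext a
  rw [Matrix.mul_apply_eq_vecMul]
  exact (chainVec_chainSum (hf a a.2)).symm

theorem chainMatrix_transposeOn (K : Finset (Finset V)) (f : Finset V → Finset (Finset V)) :
    chainMatrix K (transposeOn K f) = (chainMatrix K f)ᵀ := by
  ext a b
  simp [chainMatrix, chainVec, transposeOn]

theorem IsMorseMatching.exists_chainSum_eq_symmDiff {ι : Type*} [Fintype ι] [DecidableEq ι]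
    {s t : ι → K} {C : Set K} {L M : Finset V → Finset (Finset V)} {z : Finset (Finset V)}
    (h : IsMorseMatching (chainMatrix K f) s t C)
    (hff : chainMatrix K f * chainMatrix K f = 0) (hf : ∀ a ∈ K, f a ⊆ K)
    (hL : IsReferenceMatrix (chainMatrix K f) t C (chainMatrix K L)) (hLK : ∀ a ∈ K, L a ⊆ K)
    (hM : IsReferenceMatrix (chainMatrix K f)ᵀ s C (chainMatrix K M))
    (hz : z ⊆ K) (hzf : chainSum z f = ∅) :
    ∃ c ⊆ K, chainSum c f = symmDiff (chainSum (chainSum z L) (transposeOn K M)) z := by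
  have hcycle : chainVec K z ᵥ* chainMatrix K f = 0 := by
    rw [← chainVec_chainSum hz, hzf, chainVec_empty]
  obtain ⟨v, hv⟩ := h.exists_vecMul_eq_sub hff hL hM hcycle
  obtain ⟨c, hcK, rfl⟩ := exists_chainVec_eq v
  have hzL : chainSum z L ⊆ K := chainSum_subset fun a ha => hLK a (hz ha)
  have hzLM : chainSum (chainSum z L) (transposeOn K M) ⊆ K :=
    chainSum_subset fun _ _ => Finset.filter_subset _ _
  refine ⟨c, hcK, eq_of_chainVec_eq (chainSum_subset fun a ha => hf a (hcK ha))
    (symmDiff_le_sup.trans (Finset.union_subset hzLM hz)) ?_⟩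
  rw [chainVec_symmDiff, chainVec_chainSum hcK, chainVec_chainSum hzL, chainVec_chainSum hz,
    chainMatrix_transposeOn, hv]

end Chains

section Faces

variable {α : Type*} {K : Finset (Finset α)} {σ τ : Finset α}

theorem mem_bd : σ ∈ bd τ ↔ σ ⊆ τ ∧ σ.Nonempty ∧ σ.card + 1 = τ.card := by
  rw [bd, Finset.mem_filter, Finset.mem_powerset]

theorem IsComplex.bd_subset (hK : IsComplex K) (hτ : τ ∈ K) : bd τ ⊆ K := fun σ hσ =>
  let ⟨hστ, hne, _⟩ := mem_bd.1 hσ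
  (hK τ hτ).2 σ hστ hne

theorem IsFreePair.card_add_one (h : IsFreePair K σ τ) (hK : IsComplex K) :
    σ.card + 1 = τ.card := by
  classical
  obtain ⟨-, hτ, hστ, huniq⟩ := h
  obtain ⟨v, hvτ, hvσ⟩ := Finset.exists_of_ssubset hστ
  have hmem : insert v σ ∈ K :=
    (hK τ hτ).2 _ (Finset.insert_subset hvτ hστ.1) (Finset.insert_nonempty v σ)
  rw [← huniq _ hmem (Finset.ssubset_insert hvσ), Finset.card_insert_of_notMem hvσ]

end Faces

section Boundary

variable {K c : Finset (Finset V)} {σ τ : Finset V} {p : ℕ}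

theorem mem_cobd : τ ∈ cobd K σ ↔ τ ∈ K ∧ σ ⊆ τ ∧ σ.card + 1 = τ.card :=
  Finset.mem_filter

theorem even_card_filter_mem_bd (σ τ : Finset V) :
    Even ((bd τ).filter fun ρ => σ ∈ bd ρ).card := by
  rcases ((bd τ).filter fun ρ => σ ∈ bd ρ).eq_empty_or_nonempty with hempty | ⟨ρ₀, hρ₀⟩
  · simp [hempty]
  obtain ⟨hρτ, hσρ⟩ := Finset.mem_filter.1 hρ₀
  obtain ⟨hρτ, -, hcardτ⟩ := mem_bd.1 hρτ
  obtain ⟨hσρ, hσ, hcardσ⟩ := mem_bd.1 hσρ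
  have hστ : σ ⊆ τ := hσρ.trans hρτ
  have hIoo : ((bd τ).filter fun ρ => σ ∈ bd ρ) = Finset.Ioo σ τ := by
    ext ρ
    simp only [Finset.mem_filter, mem_bd, Finset.mem_Ioo]
    constructor
    · rintro ⟨⟨hρτ, -, hρ⟩, hσρ, -, hρ'⟩
      exact ⟨Finset.ssubset_iff_subset_ne.2 ⟨hσρ, by rintro rfl; omega⟩,
        Finset.ssubset_iff_subset_ne.2 ⟨hρτ, by rintro rfl; omega⟩⟩
    · rintro ⟨hσρ, hρτ⟩
      have hlt := Finset.card_lt_card hσρ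
      have hlt' := Finset.card_lt_card hρτ
      exact ⟨⟨hρτ.1, hσ.mono hσρ.1, by omega⟩, hσρ.1, hσ, by omega⟩
  rw [hIoo, Finset.card_Ioo_finset hστ, show τ.card - σ.card = 2 by omega]
  decide

theorem chainSum_bd_bd (τ : Finset V) : chainSum (bd τ) bd = ∅ :=
  Finset.eq_empty_of_forall_notMem fun σ hσ =>
    Nat.not_odd_iff_even.2 (even_card_filter_mem_bd σ τ) (mem_chainSum.1 hσ)

theorem IsComplex.chainMatrix_bd_mul_self (hK : IsComplex K) :
    chainMatrix K bd * chainMatrix K bd = 0 := by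
  rw [chainMatrix_mul fun _ => hK.bd_subset]
  funext a
  exact (congrArg (chainVec K) (chainSum_bd_bd (a : Finset V))).trans (chainVec_empty K)

theorem IsComplex.chainMatrix_cobd (hK : IsComplex K) :
    chainMatrix K (cobd K) = (chainMatrix K bd).transpose := by
  ext a b
  simp [chainMatrix, chainVec, mem_bd, mem_cobd, (hK a a.2).1]

theorem homologous_of_chainSum_bd_eq {z z' : Finset (Finset V)} (hz : IsChainOf K p z)
    (hz' : IsChainOf K p z') (hc : c ⊆ K) (h : chainSum c bd = symmDiff z z') :
    Homologous K p z z' := by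
  refine ⟨c.filter fun x => x.card = p + 2, fun x hx => ?_, ?_⟩
  · obtain ⟨hxc, hcard⟩ := Finset.mem_filter.1 hx
    exact ⟨hc hxc, hcard⟩
  · rw [chainSum_filter (Q := fun a => a.card = p + 1) fun x _ a ha => by
      have := (mem_bd.1 ha).2.2; omega, h, Finset.filter_true_of_mem]
    exact fun a ha => (hz.symmDiff hz' a ha).2

theorem cohomologous_of_chainSum_cobd_eq {z z' : Finset (Finset V)} (hK : IsComplex K)
    (hz : IsChainOf K p z) (hz' : IsChainOf K p z') (hc : c ⊆ K)
    (h : chainSum c (cobd K) = symmDiff z z') : Cohomologous K p z z' := by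
  -- Faces are nonempty, so for `p = 0` the filtered chain is empty and the truncation in `p - 1`
  -- does no harm.
  refine ⟨c.filter fun x => x.card = p, fun x hx => ?_, ?_⟩
  · obtain ⟨hxc, hcard⟩ := Finset.mem_filter.1 hx
    have hpos := (hK x (hc hxc)).1.card_pos
    exact ⟨hc hxc, by omega⟩
  · rw [chainSum_filter (Q := fun a => a.card = p + 1) fun x _ a ha => by
      have := (mem_cobd.1 ha).2.2; omega, h, Finset.filter_true_of_mem]
    exact fun a ha => (hz.symmDiff hz' a ha).2

theorem pair_eq_pair_of_ssubset {σ' τ' : Finset V} (h : σ ⊂ τ) (h' : σ' ⊂ τ')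
    (heq : ({σ, τ} : Finset (Finset V)) = {σ', τ'}) : σ = σ' ∧ τ = τ' := by
  have hset : ({σ, τ} : Set (Finset V)) = {σ', τ'} := by
    simpa using congrArg (fun s : Finset (Finset V) => (s : Set (Finset V))) heq
  rcases Set.pair_eq_pair_iff.1 hset with hsame | ⟨rfl, rfl⟩
  exacts [hsame, absurd h' h.asymm]

end Boundary

namespace MorseSeq

variable (W : MorseSeq V) {σ τ : Finset V} {i j : ℕ}

theorem isComplex_cplx : IsComplex W.cplx :=
  W.cpx W.k le_rfl

theorem seq_subset_seq (hij : i ≤ j) (hj : j ≤ W.k) : W.seq i ⊆ W.seq j := by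
  induction j, hij using Nat.le_induction with
  | base => exact subset_rfl
  | succ n _ ih =>
    have hstep : W.seq n ⊆ W.seq (n + 1) := by
      rcases W.step (n + 1) (by omega) hj with ⟨σ, τ, -, h⟩ | ⟨ν, -, h⟩ <;>
        exact h.trans_subset Finset.sdiff_subset
    exact (ih (by omega)).trans hstep

theorem seq_sdiff_seq_pred (hi : 1 ≤ i) (hik : i ≤ W.k) :
    (∃ σ τ, IsFreePair (W.seq i) σ τ ∧ W.seq i \ W.seq (i - 1) = {σ, τ}) ∨
      ∃ ν, W.seq i \ W.seq (i - 1) = {ν} := by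
  rcases W.step i hi hik with ⟨σ, τ, hfree, h⟩ | ⟨ν, hν, h⟩
  · refine Or.inl ⟨σ, τ, hfree, ?_⟩
    rw [h, Finset.sdiff_sdiff_eq_self]
    exact Finset.insert_subset hfree.1 (Finset.singleton_subset_iff.2 hfree.2.1)
  · refine Or.inr ⟨ν, ?_⟩
    rw [h, Finset.sdiff_sdiff_eq_self (Finset.singleton_subset_iff.2 hν.1)]

/-- The index at which a face enters the sequence; it is the junk value `0` for a set that never
does. -/
noncomputable def birth (σ : Finset V) : ℕ :=
  sInf {i | σ ∈ W.seq i}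

variable {W}

theorem mem_seq_birth (hσ : σ ∈ W.cplx) : σ ∈ W.seq (W.birth σ) :=
  Nat.sInf_mem (s := {i | σ ∈ W.seq i}) ⟨W.k, hσ⟩

theorem birth_le (hσ : σ ∈ W.seq i) : W.birth σ ≤ i :=
  Nat.sInf_le hσ

theorem birth_mono (hτ : τ ∈ W.cplx) (hσ : σ.Nonempty) (hστ : σ ⊆ τ) : W.birth σ ≤ W.birth τ :=
  birth_le ((W.cpx _ (birth_le hτ) τ (mem_seq_birth hτ)).2 σ hστ hσ)

theorem birth_eq (hik : i ≤ W.k) (hσ : σ ∈ W.seq i \ W.seq (i - 1)) : W.birth σ = i := by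
  obtain ⟨hmem, hnotMem⟩ := Finset.mem_sdiff.1 hσ
  refine (birth_le hmem).antisymm (le_of_not_gt fun hlt => hnotMem ?_)
  exact W.seq_subset_seq (by omega) (by omega) (mem_seq_birth (W.seq_subset_seq hik le_rfl hmem))

theorem one_le_birth (hσ : σ ∈ W.cplx) : 1 ≤ W.birth σ := by
  rw [Nat.one_le_iff_ne_zero]
  intro h
  simpa [h, W.init] using mem_seq_birth hσ

theorem mem_seq_birth_sdiff (hσ : σ ∈ W.cplx) :
    σ ∈ W.seq (W.birth σ) \ W.seq (W.birth σ - 1) := by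
  refine Finset.mem_sdiff.2 ⟨mem_seq_birth hσ, fun h => ?_⟩
  have hle := birth_le h
  have hpos := one_le_birth hσ
  omega

theorem critical_or_lowerRegular_or_upperRegular (hσ : σ ∈ W.cplx) :
    W.Critical σ ∨ W.LowerRegular σ ∨ W.UpperRegular σ := by
  have hpos := one_le_birth hσ
  have hle : W.birth σ ≤ W.k := birth_le hσ
  have hnew := mem_seq_birth_sdiff hσ
  rcases W.seq_sdiff_seq_pred hpos hle with ⟨σ', τ', hfree, h⟩ | ⟨ν, h⟩
  · have hreg : W.Regular σ' τ' := ⟨_, hpos, hle, hfree.2.2.1, h⟩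
    rw [h, Finset.mem_insert, Finset.mem_singleton] at hnew
    rcases hnew with rfl | rfl
    exacts [Or.inr (Or.inl ⟨τ', hreg⟩), Or.inr (Or.inr ⟨σ', hreg⟩)]
  · rw [h, Finset.mem_singleton] at hnew
    exact Or.inl ⟨_, hpos, hle, by rw [h, hnew]⟩

theorem Critical.mem_cplx {ν : Finset V} (h : W.Critical ν) : ν ∈ W.cplx := by
  obtain ⟨i, -, hik, hnew⟩ := h
  have hν : ν ∈ W.seq i \ W.seq (i - 1) := hnew ▸ Finset.mem_singleton_self ν
  exact W.seq_subset_seq hik le_rfl (Finset.mem_sdiff.1 hν).1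

namespace Regular

theorem ssubset (h : W.Regular σ τ) : σ ⊂ τ :=
  let ⟨_, _, _, hστ, _⟩ := h
  hστ

theorem mem_cplx (h : W.Regular σ τ) : σ ∈ W.cplx ∧ τ ∈ W.cplx := by
  obtain ⟨i, -, hik, -, hnew⟩ := h
  have hpair : {σ, τ} ⊆ W.cplx :=
    hnew.symm.trans_subset (Finset.sdiff_subset.trans (W.seq_subset_seq hik le_rfl))
  exact ⟨hpair (by simp), hpair (by simp)⟩

theorem birth_eq_birth (h : W.Regular σ τ) : W.birth τ = W.birth σ := by
  obtain ⟨i, -, hik, -, hnew⟩ := h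
  rw [MorseSeq.birth_eq hik (σ := σ) (by simp [hnew]), MorseSeq.birth_eq hik (by simp [hnew])]

theorem seq_birth_sdiff (h : W.Regular σ τ) :
    W.seq (W.birth σ) \ W.seq (W.birth σ - 1) = {σ, τ} := by
  obtain ⟨i, -, hik, -, hnew⟩ := h
  rwa [MorseSeq.birth_eq hik (by simp [hnew])]

theorem eq_of_birth_eq {σ' τ' : Finset V} (h : W.Regular σ τ) (h' : W.Regular σ' τ')
    (hbirth : W.birth σ = W.birth σ') : σ = σ' ∧ τ = τ' := by
  refine pair_eq_pair_of_ssubset h.ssubset h'.ssubset ?_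
  rw [← h.seq_birth_sdiff, ← h'.seq_birth_sdiff, hbirth]

theorem card_add_one (h : W.Regular σ τ) : σ.card + 1 = τ.card := by
  obtain ⟨i, hi, hik, hστ, hnew⟩ := h
  rcases W.seq_sdiff_seq_pred hi hik with ⟨σ', τ', hfree, h'⟩ | ⟨ν, h'⟩
  · obtain ⟨rfl, rfl⟩ := pair_eq_pair_of_ssubset hστ hfree.2.2.1 (hnew.symm.trans h')
    exact hfree.card_add_one (W.cpx i hik)
  · have hcard := congrArg Finset.card (hnew.symm.trans h')
    rw [Finset.card_pair hστ.ne, Finset.card_singleton] at hcard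
    omega

theorem mem_bd (h : W.Regular σ τ) : σ ∈ bd τ :=
  _root_.mem_bd.2 ⟨h.ssubset.1, (W.isComplex_cplx σ h.mem_cplx.1).1, h.card_add_one⟩

end Regular

variable (W)

/-- The regular pairs of `W`, as pairs of faces of its complex. -/
abbrev RegularPair : Type _ :=
  {q : W.cplx × W.cplx // W.Regular q.1 q.2}

/-- The lower face of a regular pair. -/
def lower (q : W.RegularPair) : W.cplx := q.1.1

/-- The upper face of a regular pair. -/
def upper (q : W.RegularPair) : W.cplx := q.1.2

/-- The critical faces of `W`, as a set of faces of its complex. -/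
def criticalFaces : Set W.cplx := {ν | W.Critical ν}

noncomputable instance : Fintype W.RegularPair :=
  Fintype.ofFinite _

variable {W}

theorem RegularPair.eq_of_birth_lower_eq {q r : W.RegularPair}
    (h : W.birth (W.lower q) = W.birth (W.lower r)) : q = r := by
  obtain ⟨hlower, hupper⟩ := q.2.eq_of_birth_eq r.2 h
  exact Subtype.ext (Prod.ext (Subtype.ext hlower) (Subtype.ext hupper))

theorem isUnit_chainMatrix_bd_submatrix :
    IsUnit ((chainMatrix W.cplx bd).submatrix W.upper W.lower) := by
  refine isUnit_of_blockTriangular_of_injective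
    (b := fun q => OrderDual.toDual (W.birth (W.lower q)))
    (fun q r h => RegularPair.eq_of_birth_lower_eq (OrderDual.toDual.injective h)) ?_ ?_
  · intro q r (hlt : W.birth (W.lower q) < W.birth (W.lower r))
    have hnotMem : (W.lower r : Finset V) ∉ bd (W.upper q) := fun hmem => by
      obtain ⟨hsub, hne, -⟩ := mem_bd.1 hmem
      exact hlt.not_ge ((birth_mono (W.upper q).2 hne hsub).trans_eq q.2.birth_eq_birth)
    exact if_neg hnotMem
  · intro q
    have hentry : chainMatrix W.cplx bd (W.upper q) (W.lower q) = 1 := if_pos q.2.mem_bd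
    exact isUnit_iff_eq_one.2 hentry

variable (W) in
theorem isMorseMatching :
    IsMorseMatching (chainMatrix W.cplx bd) W.lower W.upper W.criticalFaces where
  injective_lower q r h := RegularPair.eq_of_birth_lower_eq (by rw [h])
  injective_upper q r h := RegularPair.eq_of_birth_lower_eq <|
    calc W.birth (W.lower q) = W.birth (W.upper q) := q.2.birth_eq_birth.symm
      _ = W.birth (W.upper r) := by rw [h]
      _ = W.birth (W.lower r) := r.2.birth_eq_birth
  cover a := by
    rcases critical_or_lowerRegular_or_upperRegular a.2 with h | ⟨τ, h⟩ | ⟨σ, h⟩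
    · exact Or.inl h
    · exact Or.inr (Or.inl ⟨⟨(a, ⟨τ, h.mem_cplx.2⟩), h⟩, rfl⟩)
    · exact Or.inr (Or.inr ⟨⟨(⟨σ, h.mem_cplx.1⟩, a), h⟩, rfl⟩)
  isUnit_submatrix := isUnit_chainMatrix_bd_submatrix

theorem isReferenceMatrix_chainMatrix {f Υ : Finset V → Finset (Finset V)}
    {t : W.RegularPair → W.cplx} (hf : ∀ a ∈ W.cplx, f a ⊆ W.cplx)
    (hcrit : ∀ ν, W.Critical ν → Υ ν = {ν}) (hmatched : ∀ q, Υ (t q) = ∅)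
    (hsum : ∀ q, chainSum (f (t q)) Υ = ∅) :
    IsReferenceMatrix (chainMatrix W.cplx f) t W.criticalFaces (chainMatrix W.cplx Υ) where
  row_critical a ha :=
    (congrArg (chainVec W.cplx) (hcrit a ha)).trans (chainVec_singleton a)
  row_matched q := (congrArg (chainVec W.cplx) (hmatched q)).trans (chainVec_empty _)
  mul_row_matched q := by
    rw [chainMatrix_mul hf]
    exact (congrArg (chainVec W.cplx) (hsum q)).trans (chainVec_empty _)

end MorseSeq

section Frames

variable {W : MorseSeq V} {Υ : Finset V → Finset (Finset V)} {p : ℕ} {z : Finset (Finset V)}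

theorem IsFrame.subset_cplx (h : IsFrame W Υ) {ν : Finset V} (hν : ν ∈ W.cplx) :
    Υ ν ⊆ W.cplx := fun μ hμ => (h ν hν μ hμ).1.mem_cplx

theorem IsFrame.isChainOf_chainSum (h : IsFrame W Υ) (hz : IsChainOf W.cplx p z) :
    IsChainOf W.cplx p (chainSum z Υ) :=
  isChainOf_chainSum_of_forall fun ν hν μ hμ =>
    let ⟨hνK, hcard⟩ := hz ν hν
    ⟨h.subset_cplx hνK hμ, (h ν hνK μ hμ).2.trans hcard⟩

theorem IsFrame.isChainOf_chainSum_transposeOn (h : IsFrame W Υ) (hz : IsChainOf W.cplx p z) :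
    IsChainOf W.cplx p (chainSum z (transposeOn W.cplx Υ)) :=
  isChainOf_chainSum_of_forall fun κ hκ ν hν =>
    let ⟨hνK, hκν⟩ := Finset.mem_filter.1 hν
    ⟨hνK, (h ν hνK κ hκν).2.symm.trans (hz κ hκ).2⟩

theorem IsRefMap.isReferenceMatrix (h : IsRefMap W Υ) :
    IsReferenceMatrix (chainMatrix W.cplx bd) W.upper W.criticalFaces (chainMatrix W.cplx Υ) :=
  MorseSeq.isReferenceMatrix_chainMatrix (fun _ => W.isComplex_cplx.bd_subset) h.2.1
    (fun q => (h.2.2 _ ⟨_, q.2⟩).1) fun q => (h.2.2 _ ⟨_, q.2⟩).2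

theorem IsCorefMap.isReferenceMatrix (h : IsCorefMap W Υ) :
    IsReferenceMatrix (chainMatrix W.cplx (cobd W.cplx)) W.lower W.criticalFaces
      (chainMatrix W.cplx Υ) :=
  MorseSeq.isReferenceMatrix_chainMatrix (fun _ _ => Finset.filter_subset _ _) h.2.1
    (fun q => (h.2.2 _ ⟨_, q.2⟩).1) fun q => (h.2.2 _ ⟨_, q.2⟩).2

end Frames

/-- For a `p`-cycle `z` of `K`, `∧̃(∧(z))` is homologous to `z`; for a
`p`-cocycle `z` of `K`, `∨̃(∨(z))` is cohomologous to `z`. -/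
theorem extension_of_reference_homologous (W : MorseSeq V)
    (Λ Vee : Finset V → Finset (Finset V))
    (hΛ : IsRefMap W Λ) (hV : IsCorefMap W Vee)
    (p : ℕ) (z : Finset (Finset V)) (hz : IsChainOf W.cplx p z) :
    (chainSum z bd = ∅ →
      Homologous W.cplx p (chainSum (chainSum z Λ) (extMap W Vee)) z) ∧
    (chainSum z (cobd W.cplx) = ∅ →
      Cohomologous W.cplx p (chainSum (chainSum z Vee) (coextMap W Λ)) z) := by
  have hK := W.isComplex_cplx
  have hzK : z ⊆ W.cplx := fun a ha => (hz a ha).1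
  have hcobd := hK.chainMatrix_cobd
  have hcobdT : (chainMatrix W.cplx (cobd W.cplx)).transpose = chainMatrix W.cplx bd := by
    rw [hcobd, Matrix.transpose_transpose]
  refine ⟨fun hcycle => ?_, fun hcocycle => ?_⟩
  · obtain ⟨c, hc, hbd⟩ := W.isMorseMatching.exists_chainSum_eq_symmDiff
      hK.chainMatrix_bd_mul_self (fun _ => hK.bd_subset) hΛ.isReferenceMatrix
      (fun _ => hΛ.1.subset_cplx) (hcobd ▸ hV.isReferenceMatrix) hzK hcycle
    exact homologous_of_chainSum_bd_eq
      (hV.1.isChainOf_chainSum_transposeOn (hΛ.1.isChainOf_chainSum hz)) hz hc hbd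
  · have hmatch := hcobd ▸ W.isMorseMatching.transpose
    have hsq : chainMatrix W.cplx (cobd W.cplx) * chainMatrix W.cplx (cobd W.cplx) = 0 := by
      rw [hcobd, ← Matrix.transpose_mul, hK.chainMatrix_bd_mul_self, Matrix.transpose_zero]
    obtain ⟨c, hc, hbd⟩ := hmatch.exists_chainSum_eq_symmDiff hsq
      (fun _ _ => Finset.filter_subset _ _) hV.isReferenceMatrix (fun _ => hV.1.subset_cplx)
      (hcobdT.symm ▸ hΛ.isReferenceMatrix) hzK hcocycle
    exact cohomologous_of_chainSum_cobd_eq hK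
      (hΛ.1.isChainOf_chainSum_transposeOn (hV.1.isChainOf_chainSum hz)) hz hc hbd
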